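/- Let n ≥ 1 be a natural number and let r be a real number with 0 < r ≤ π/3. Let x_0, x_1, …, x_k be unit vectors in EuclideanSpace ℝ (Fin (n+1)) such that for all 0 ≤ i, j ≤ k one has min(arccos⟪x_i, x_j⟫, arccos(−⟪x_i, x_j⟫)) < r (i.e., the antipodal orbits {±x_i} have pairwise quotient distance < r). Then there exist signs ε_1, …, ε_k ∈ {1, −1} such that, setting ε_0 = 1, arccos(ε_i ε_j ⟪x_i, x_j⟫) < r for all 0 ≤ i, j ≤ k; moreover these signs are unique: if δ_1, …, δ_k ∈ {1, −1} also satisfy arccos(δ_i ⟪x_0, x_i⟫) < r for all i, then δ_i = ε_i for every i. (This says the antipodal C₂-action on the unit sphere is a strong r-diameter action for 0 < r ≤ π/3.) -/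

import Mathlib

open Real
open scoped RealInnerProductSpace

/-!
Two antipodal points lie at distance `π` on the unit sphere, so at most one sign brings a given
point within `r ≤ π / 2` of a base point. Choose all the signs this way. Two of the chosen points
are then at distance `< 2 * r`; were they not within `r` of each other, one of them would be within
`r` of the antipode of the other, and the triangle inequality would give `π < 3 * r`.
-/

section Arccos

variable {r a s t : ℝ}

theorem exists_sign_arccos_mul_lt (h : min (arccos a) (arccos (-a)) < r) :
    ∃ s : ℝ, (s = 1 ∨ s = -1) ∧ arccos (s * a) < r := by
  rcases min_lt_iff.1 h with h | h
  · exact ⟨1, .inl rfl, by rwa [one_mul]⟩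
  · exact ⟨-1, .inr rfl, by rwa [neg_one_mul]⟩

theorem min_arccos_neg_sign_mul (hs : s = 1 ∨ s = -1) :
    min (arccos (s * a)) (arccos (-(s * a))) = min (arccos a) (arccos (-a)) := by
  rcases hs with rfl | rfl
  · rw [one_mul]
  · rw [neg_one_mul, neg_neg, min_comm]

theorem not_arccos_lt_and_arccos_neg_lt (hr : r ≤ π / 2) :
    ¬(arccos a < r ∧ arccos (-a) < r) := by
  rw [arccos_neg]
  rintro ⟨h, h_neg⟩
  linarith

theorem sign_eq_of_arccos_mul_lt (hr : r ≤ π / 2) (hs : s = 1 ∨ s = -1) (ht : t = 1 ∨ t = -1)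
    (hsa : arccos (s * a) < r) (hta : arccos (t * a) < r) : s = t := by
  rcases hs with rfl | rfl <;> rcases ht with rfl | rfl <;>
    simp only [one_mul, neg_one_mul] at hsa hta
  · rfl
  · exact (not_arccos_lt_and_arccos_neg_lt hr ⟨hsa, hta⟩).elim
  · exact (not_arccos_lt_and_arccos_neg_lt hr ⟨hta, hsa⟩).elim
  · rfl

end Arccos

section InnerProductSpace

variable {V : Type*} [NormedAddCommGroup V] [InnerProductSpace ℝ V] {u v w : V} {r s : ℝ}

theorem norm_sign_smul (hs : s = 1 ∨ s = -1) (u : V) : ‖s • u‖ = ‖u‖ := by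
  rcases hs with rfl | rfl <;> simp

theorem arccos_inner_eq_angle (hu : ‖u‖ = 1) (hv : ‖v‖ = 1) :
    arccos ⟪u, v⟫ = InnerProductGeometry.angle u v := by
  simp [InnerProductGeometry.angle, hu, hv]

theorem arccos_inner_le_add (hu : ‖u‖ = 1) (hv : ‖v‖ = 1) (hw : ‖w‖ = 1) :
    arccos ⟪u, w⟫ ≤ arccos ⟪u, v⟫ + arccos ⟪v, w⟫ := by
  rw [arccos_inner_eq_angle hu hv, arccos_inner_eq_angle hv hw, arccos_inner_eq_angle hu hw]
  exact InnerProductGeometry.angle_le_angle_add_angle u v w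

theorem arccos_inner_lt_of_min_lt (hr : r ≤ π / 3) (hu : ‖u‖ = 1) (hv : ‖v‖ = 1) (hw : ‖w‖ = 1)
    (hwu : arccos ⟪w, u⟫ < r) (hwv : arccos ⟪w, v⟫ < r)
    (huv : min (arccos ⟪u, v⟫) (arccos (-⟪u, v⟫)) < r) : arccos ⟪u, v⟫ < r := by
  refine (min_lt_iff.1 huv).resolve_right fun h_neg => ?_
  rw [arccos_neg] at h_neg
  have h_triangle := arccos_inner_le_add hu hw hv
  rw [real_inner_comm] at hwu
  linarith

theorem antipodal_strong_r_diameter_action_general {ι : Type*} (hr : r ≤ π / 3)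
    (i₀ : ι) (x : ι → V) (hx : ∀ i, ‖x i‖ = 1)
    (horb : ∀ i j, min (arccos ⟪x i, x j⟫) (arccos (-⟪x i, x j⟫)) < r) :
    ∃ ε : ι → ℝ, ε i₀ = 1 ∧ (∀ i, ε i = 1 ∨ ε i = -1) ∧
      (∀ i j, arccos (ε i * ε j * ⟪x i, x j⟫) < r) ∧
      ∀ δ : ι → ℝ, (∀ i, δ i = 1 ∨ δ i = -1) →
        (∀ i, arccos (δ i * ⟪x i₀, x i⟫) < r) → ∀ i, δ i = ε i := by
  have hr_half : r ≤ π / 2 := by linarith [pi_pos]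
  choose ε hε hε_lt using fun i => exists_sign_arccos_mul_lt (horb i₀ i)
  refine ⟨ε, ?base, hε, fun i j => ?close, fun δ hδ hδ_lt i =>
    sign_eq_of_arccos_mul_lt hr_half (hδ i) (hε i) (hδ_lt i) (hε_lt i)⟩
  case base =>
    have hr_pos : 0 < r := (arccos_nonneg _).trans_lt (hε_lt i₀)
    have h_one : arccos (1 * ⟪x i₀, x i₀⟫) < r := by simpa [hx] using hr_pos
    exact sign_eq_of_arccos_mul_lt hr_half (hε i₀) (.inl rfl) (hε_lt i₀) h_one
  case close =>
    have h_norm (l : ι) : ‖ε l • x l‖ = 1 := (norm_sign_smul (hε l) (x l)).trans (hx l)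
    have h_near (l : ι) : arccos ⟪x i₀, ε l • x l⟫ < r := by
      rw [real_inner_smul_right]
      exact hε_lt l
    have h_inner : ⟪ε i • x i, ε j • x j⟫ = ε i * (ε j * ⟪x i, x j⟫) := by
      rw [real_inner_smul_left, real_inner_smul_right]
    rw [mul_assoc, ← h_inner]
    refine arccos_inner_lt_of_min_lt hr (h_norm i) (h_norm j) (hx i₀) (h_near i) (h_near j) ?_
    rw [h_inner, min_arccos_neg_sign_mul (hε i), min_arccos_neg_sign_mul (hε j)]
    exact horb i j

end InnerProductSpace

/-- The antipodal `C₂`-action on the unit sphere of `EuclideanSpace ℝ (Fin (n+1))` is a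
strong `r`-diameter action for `0 < r ≤ π/3`: if the antipodal orbits `{± x i}` of unit
vectors `x 0, …, x k` have pairwise quotient distance `< r`, there are signs `ε i ∈ {1, −1}`
with `ε 0 = 1` such that `arccos (ε i * ε j * ⟪x i, x j⟫) < r` for all `i, j`, and these
signs are unique among families of signs `δ` with `δ 0 = 1` and
`arccos (δ i * ⟪x 0, x i⟫) < r` for all `i`. -/
theorem antipodal_strong_r_diameter_action (n : ℕ) (hn : 1 ≤ n)
    (r : ℝ) (hr₀ : 0 < r) (hr : r ≤ π / 3)
    (k : ℕ) (x : Fin (k + 1) → EuclideanSpace ℝ (Fin (n + 1))) (hx : ∀ i, ‖x i‖ = 1)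
    (horb : ∀ i j, min (Real.arccos ⟪x i, x j⟫) (Real.arccos (-⟪x i, x j⟫)) < r) :
    ∃ ε : Fin (k + 1) → ℝ, ε 0 = 1 ∧ (∀ i, ε i = 1 ∨ ε i = -1) ∧
      (∀ i j, Real.arccos (ε i * ε j * ⟪x i, x j⟫) < r) ∧
      ∀ δ : Fin (k + 1) → ℝ, δ 0 = 1 → (∀ i, δ i = 1 ∨ δ i = -1) →
        (∀ i, Real.arccos (δ i * ⟪x 0, x i⟫) < r) →
        ∀ i, δ i = ε i := by
  obtain ⟨ε, hε₀, hε, hε_lt, hε_unique⟩ := antipodal_strong_r_diameter_action_general hr 0 x hx horb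
  exact ⟨ε, hε₀, hε, hε_lt, fun δ _ => hε_unique δ⟩
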